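/- Let 1/2 < γ ≤ 1, let A : ℝ³ → ℝ³⊗ℝ³ satisfy ‖∇A‖_2 < ∞, let X, X̃ ∈ 𝒞^γ, and let F, F̃ be the maps F(Y)(t)_ξ := X_ξ + ∫_0^t V^{Y(s)}(Y(s)_ξ) ds and F̃(Y)(t)_ξ := X̃_ξ + ∫_0^t V^{Y(s)}(Y(s)_ξ) ds on 𝐗_T = C([0,T],𝒞^γ). Then there is a constant C_γ depending only on γ such that for all Y, Ỹ ∈ 𝐗_T, ‖F(Y) − F̃(Ỹ)‖_{𝐗_T} ≤ ‖X − X̃‖_γ^* + C_γ T ‖∇A‖_2 (1 + ‖Y‖_{𝐗_T} + ‖Ỹ‖_{𝐗_T})³ ‖Y − Ỹ‖_{𝐗_T}. In particular there exists a time T̄ ≤ T₀ such that F is a strict contraction on the invariant set Q_{T̄}. -/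

import Mathlib

/-!
Why the estimate holds. The velocities are limits of Riemann–Stieltjes sums, so they may be
computed along dyadic partitions only. Refining a dyadic sum of `∫ f dg` once changes it by
`2 ^ n` terms of size `‖f‖_γ ‖g‖_γ 2 ^ (-2 γ (n + 1))`; as `γ > 1/2` these errors are summed by a
geometric series, and since `g` is closed the coarsest sum vanishes. Hence every dyadic sum is at
most `K_γ ‖f‖_γ ‖g‖_γ` (`norm_dySum_le`).

Bilinearity splits `V^Z(Z_ξ) - V^Z̃(Z̃_ξ)` into an integral of `A(Z_ξ - Z_ρ) - A(Z̃_ξ - Z̃_ρ)`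
against `dZ_ρ` and an integral of `A(Z̃_ξ - Z̃_ρ)` against `d(Z - Z̃)_ρ`. The Hölder norms in `ρ`
of the integrands are second order differences of `A` (`four_point`); those of their increments
between `ξ` and `η` are third order differences of `A` (`eight_point`), which is where three
derivatives are needed. This bounds the difference of velocities uniformly and in Hölder norm by
a multiple of `‖∇A‖_2 (1 + R)³ ‖Z - Z̃‖_γ^*` (`velocity_sub_le`, `velocity_holder_sub_le`), where
`R` bounds the Hölder norms of both curves.

The uniform bound also shows that the velocity is continuous in time along a curve of `𝐗_T`, so
the time integrals are genuine and integrating gives the Lipschitz estimate (`Fmap_lipschitz`).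
Comparison with the zero curve gives the a priori bound for `F` (`Fmap_bound`), and for a small
time the ball of radius `‖X‖_γ^* + 1` is invariant with `F` contracting by the factor `1/2`.
-/

/- Common framework: Hölder curves on [0,1], Riemann–Stieltjes/Young/rough integrals as
limits of (compensated) partition sums, controlled paths, and covariations. -/

noncomputable section

open Set Filter Topology MeasureTheory
open scoped ENNReal

/-- Three dimensional Euclidean space. -/
abbrev E3 : Type := EuclideanSpace ℝ (Fin 3)

/-- `ℝ³ ⊗ ℝ³`, realized as (continuous) linear endomorphisms of `ℝ³`. -/
abbrev M3 : Type := E3 →L[ℝ] E3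

/-- Outer (tensor) product `a ⊗ b` of two vectors, as the linear map `v ↦ ⟪b, v⟫ • a`. -/
def oProd (a b : E3) : M3 := (innerSL ℝ b).smulRight a

/-- The canonical basis vectors of `ℝ³`. -/
def e3 (k : Fin 3) : E3 := EuclideanSpace.single k 1

/-- The `i`-th component of a vector of `ℝ³`. -/
def ecomp (i : Fin 3) (v : E3) : ℝ := @inner ℝ _ _ (e3 i) v

/-- The `(i,k)` entry of a matrix. -/
def mentry (i k : Fin 3) (M : M3) : ℝ := ecomp i (M (e3 k))

/-- `γ`-Hölder seminorm `‖X‖_γ` over the interval `[0,1]`. -/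
def hSemi {F : Type*} [NormedAddCommGroup F] (γ : ℝ) (X : ℝ → F) : ℝ :=
  sSup {r | ∃ s ∈ Icc (0:ℝ) 1, ∃ t ∈ Icc (0:ℝ) 1, s ≠ t ∧ r = ‖X s - X t‖ / |s - t| ^ γ}

/-- Supremum norm `‖X‖_∞` over the interval `[0,1]`. -/
def sNorm {F : Type*} [NormedAddCommGroup F] (X : ℝ → F) : ℝ :=
  sSup {r | ∃ s ∈ Icc (0:ℝ) 1, r = ‖X s‖}

/-- The norm `‖X‖_γ^* = ‖X‖_∞ + ‖X‖_γ`. -/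
def hStar {F : Type*} [NormedAddCommGroup F] (γ : ℝ) (X : ℝ → F) : ℝ :=
  sNorm X + hSemi γ X

/-- `X` is `γ`-Hölder continuous on `[0,1]`. -/
def HolderOn {F : Type*} [NormedAddCommGroup F] (γ : ℝ) (X : ℝ → F) : Prop :=
  ∃ C : ℝ, ∀ s ∈ Icc (0:ℝ) 1, ∀ t ∈ Icc (0:ℝ) 1, ‖X s - X t‖ ≤ C * |s - t| ^ γ

/-- A closed continuous curve parametrized by `[0,1]`. -/
def ClosedCurve {F : Type*} [NormedAddCommGroup F] (X : ℝ → F) : Prop :=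
  ContinuousOn X (Icc (0:ℝ) 1) ∧ X 0 = X 1

/-- Membership in `𝒞^γ`: closed curve with finite `γ`-Hölder norm. -/
def MemC {F : Type*} [NormedAddCommGroup F] (γ : ℝ) (X : ℝ → F) : Prop :=
  ClosedCurve X ∧ HolderOn γ X

/-- A partition `a = t 0 ≤ t 1 ≤ ⋯ ≤ t n = b` of the interval `[a,b]`. -/
structure Ptn (a b : ℝ) where
  n : ℕ
  t : ℕ → ℝ
  first : t 0 = a
  last : t n = b
  mono : ∀ i < n, t i ≤ t (i + 1)

/-- The mesh of the partition is at most `δ`. -/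
def Ptn.MeshLE {a b : ℝ} (P : Ptn a b) (δ : ℝ) : Prop :=
  ∀ i < P.n, P.t (i + 1) - P.t i ≤ δ

/-- `I` is the limit of the partition sums `S P` as the mesh of `P` tends to zero. -/
def RSLimit {F : Type*} [NormedAddCommGroup F] (a b : ℝ) (S : Ptn a b → F) (I : F) : Prop :=
  ∀ ε > 0, ∃ δ > 0, ∀ P : Ptn a b, P.MeshLE δ → ‖S P - I‖ ≤ ε

/-- `‖∇^j φ‖ = sup_x ‖∇^j φ(x)‖`. -/
def tnorm {F : Type*} [NormedAddCommGroup F] [NormedSpace ℝ F] (j : ℕ) (φ : E3 → F) : ℝ :=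
  sSup (Set.range fun x => ‖iteratedFDeriv ℝ j φ x‖)

/-- `‖∇^m φ‖_n = Σ_{k=0}^n ‖∇^{m+k} φ‖`. -/
def nablaNorm {F : Type*} [NormedAddCommGroup F] [NormedSpace ℝ F]
    (m n : ℕ) (φ : E3 → F) : ℝ :=
  ∑ k ∈ Finset.range (n + 1), tnorm (m + k) φ

/-- `‖∇^m φ‖_n < ∞` : `φ` is `(m+n)` times continuously differentiable with
`sup_x ‖∇^k φ(x)‖ < ∞` for every `m ≤ k ≤ m+n`. -/
def NablaBdd {F : Type*} [NormedAddCommGroup F] [NormedSpace ℝ F] (m n : ℕ) (φ : E3 → F) : Prop :=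
  ContDiff ℝ (m + n) φ ∧
    ∀ k : ℕ, m ≤ k → k ≤ m + n → BddAbove (Set.range fun x => ‖iteratedFDeriv ℝ k φ x‖)

/-- Riemann–Stieltjes sum for the line integral `∫_0^1 A(x - Z_η) dZ_η`. -/
def youngRS (A : E3 → M3) (Z : ℝ → E3) (x : E3) {a b : ℝ} (P : Ptn a b) : E3 :=
  ∑ i ∈ Finset.range P.n, A (x - Z (P.t i)) (Z (P.t (i + 1)) - Z (P.t i))

/-- `V = V^Z` is the Young velocity field `V^Z(x) = ∫_0^1 A(x - Z_η) dZ_η`, each value being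
the limit of Riemann–Stieltjes sums. -/
def IsYoungVelocity (A : E3 → M3) (Z : ℝ → E3) (V : E3 → E3) : Prop :=
  ∀ x : E3, RSLimit 0 1 (fun P => youngRS A Z x P) (V x)

/-- `C` is a constant realizing the Young estimate
`|∫_η^ξ (X_ρ - X_η) ⊗ dY_ρ| ≤ C ‖X‖_γ ‖Y‖_γ |ξ - η|^{2γ}`. -/
def YoungEstimate (γ C : ℝ) : Prop :=
  ∀ X Y : ℝ → E3, HolderOn γ X → HolderOn γ Y →
    ∀ η ∈ Icc (0:ℝ) 1, ∀ ξ ∈ Icc (0:ℝ) 1, η ≤ ξ →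
      ∀ I : M3,
        RSLimit η ξ (fun P => ∑ i ∈ Finset.range P.n,
          oProd (X (P.t i) - X η) (Y (P.t (i + 1)) - Y (P.t i))) I →
        ‖I‖ ≤ C * hSemi γ X * hSemi γ Y * (ξ - η) ^ (2 * γ)

/-- Continuity of `t ↦ Y(t)` from `[0,T]` into `𝒞^γ` (with the norm `‖·‖_γ^*`). -/
def ContXT (γ T : ℝ) (Y : ℝ → ℝ → E3) : Prop :=
  ∀ t ∈ Icc 0 T, ∀ ε > 0, ∃ δ > 0, ∀ s ∈ Icc 0 T, |s - t| ≤ δ →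
    hStar γ (fun ξ => Y s ξ - Y t ξ) ≤ ε

/-- The norm `‖Y‖_{𝐗_T} = sup_{t ∈ [0,T]} ‖Y(t)‖_γ^*`. -/
def xnorm (γ T : ℝ) (Y : ℝ → ℝ → E3) : ℝ :=
  sSup {r | ∃ t ∈ Icc 0 T, r = hStar γ (Y t)}

/-- Membership in `𝐗_T = C([0,T], 𝒞^γ)`. -/
def MemXT (γ T : ℝ) (Y : ℝ → ℝ → E3) : Prop :=
  (∀ t ∈ Icc 0 T, MemC γ (Y t)) ∧ ContXT γ T Y

/-- The map `F(Y)(t)_ξ = X_ξ + ∫_0^t v_s(Y(s)_ξ) ds`. -/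
def Fmap (X : ℝ → E3) (v : ℝ → E3 → E3) (Y : ℝ → ℝ → E3) : ℝ → ℝ → E3 :=
  fun t ξ => X ξ + ∫ s in (0:ℝ)..t, v s (Y s ξ)

/-- The controlled derivative of `F(Y)`:
`F(Y)'(t)_ξ = Id + ∫_0^t ∇v_s(Y(s)_ξ) ∘ Y'(s)_ξ ds`. -/
def Fmap' (v : ℝ → E3 → E3) (Y : ℝ → ℝ → E3) (Y' : ℝ → ℝ → M3) : ℝ → ℝ → M3 :=
  fun t ξ => ContinuousLinearMap.id ℝ E3
    + ∫ s in (0:ℝ)..t, (fderiv ℝ (v s) (Y s ξ)).comp (Y' s ξ)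

/-- `Y` solves the vortex filament equation on `[0,T]` with initial condition `X`,
the velocity fields being given by Young line integrals. -/
def IsYoungSolution (T : ℝ) (A : E3 → M3) (X : ℝ → E3) (Y : ℝ → ℝ → E3) : Prop :=
  ∃ v : ℝ → E3 → E3, (∀ s ∈ Icc 0 T, IsYoungVelocity A (Y s) (v s)) ∧
    ∀ t ∈ Icc 0 T, ∀ ξ ∈ Icc (0:ℝ) 1, Y t ξ = X ξ + ∫ s in (0:ℝ)..t, v s (Y s ξ)

/-- The same, on the half open interval `[0,T)`. -/
def IsYoungSolutionLt (T : ℝ) (A : E3 → M3) (X : ℝ → E3) (Y : ℝ → ℝ → E3) : Prop :=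
  ∃ v : ℝ → E3 → E3, (∀ s ∈ Ico 0 T, IsYoungVelocity A (Y s) (v s)) ∧
    ∀ t ∈ Ico 0 T, ∀ ξ ∈ Icc (0:ℝ) 1, Y t ξ = X ξ + ∫ s in (0:ℝ)..t, v s (Y s ξ)

/-- `β`-Hölder norm of a two-parameter function on `[0,1]²` (vanishing on the diagonal). -/
def rnorm {F : Type*} [NormedAddCommGroup F] (β : ℝ) (W : ℝ → ℝ → F) : ℝ :=
  sSup {r | ∃ s ∈ Icc (0:ℝ) 1, ∃ t ∈ Icc (0:ℝ) 1, s ≠ t ∧ r = ‖W s t‖ / |s - t| ^ β}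

/-- Finiteness of the `β`-Hölder norm of a two-parameter function. -/
def RBddOn {F : Type*} [NormedAddCommGroup F] (β : ℝ) (W : ℝ → ℝ → F) : Prop :=
  ∃ C : ℝ, ∀ s ∈ Icc (0:ℝ) 1, ∀ t ∈ Icc (0:ℝ) 1, ‖W s t‖ ≤ C * |s - t| ^ β

/-- `(X, 𝕏²)` is a `γ`-rough path: `X` is `γ`-Hölder, the area process `𝕏²` is continuous,
satisfies the compatibility (Chen) relation and has finite `2γ`-Hölder norm. -/
structure IsRoughPath (γ : ℝ) (X : ℝ → E3) (XX : ℝ → ℝ → M3) : Prop where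
  cont : ContinuousOn X (Icc (0:ℝ) 1)
  holder : HolderOn γ X
  cont2 : ContinuousOn (fun p : ℝ × ℝ => XX p.1 p.2) (Icc (0:ℝ) 1 ×ˢ Icc (0:ℝ) 1)
  chen : ∀ ξ ∈ Icc (0:ℝ) 1, ∀ η ∈ Icc (0:ℝ) 1, ∀ ρ ∈ Icc (0:ℝ) 1,
    XX ξ ρ - XX ξ η - XX η ρ = oProd (X ξ - X η) (X η - X ρ)
  bdd : RBddOn (2 * γ) XX

/-- Remainder `R^Y_{ηξ} = Y_ξ - Y_η - Y'_η (X_ξ - X_η)` of a controlled path. -/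
def ctrlRem (X Y : ℝ → E3) (Y' : ℝ → M3) (η ξ : ℝ) : E3 :=
  Y ξ - Y η - Y' η (X ξ - X η)

/-- `(Y, Y')` is a (closed) path weakly controlled by `X`, i.e. `Y ∈ 𝒟_X`. -/
structure IsControlled (γ : ℝ) (X Y : ℝ → E3) (Y' : ℝ → M3) : Prop where
  closed : Y 0 = Y 1
  cont : ContinuousOn Y (Icc (0:ℝ) 1)
  contD : ContinuousOn Y' (Icc (0:ℝ) 1)
  holderD : HolderOn γ Y'
  rem : RBddOn (2 * γ) (fun η ξ => ctrlRem X Y Y' η ξ)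

/-- The norm `‖Y‖_D = ‖Y'‖_γ + ‖R^Y‖_{2γ} + ‖Y'‖_∞` on `𝒟_X`. -/
def dnorm (γ : ℝ) (X Y : ℝ → E3) (Y' : ℝ → M3) : ℝ :=
  hSemi γ Y' + rnorm (2 * γ) (fun η ξ => ctrlRem X Y Y' η ξ) + sNorm Y'

/-- The norm `‖Y‖_D^* = ‖Y‖_D + ‖Y‖_∞`. -/
def dnormStar (γ : ℝ) (X Y : ℝ → E3) (Y' : ℝ → M3) : ℝ :=
  dnorm γ X Y Y' + sNorm Y

/-- The constant `C_X = 1 + ‖X‖_γ + ‖𝕏²‖_{2γ}`. -/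
def CXconst (γ : ℝ) (X : ℝ → E3) (XX : ℝ → ℝ → M3) : ℝ :=
  1 + hSemi γ X + rnorm (2 * γ) XX

/-- The compensator `P W Qᵀ` (matrix product), i.e. `(P W Qᵀ)^{ij} = P^{ik} W^{kl} Q^{jl}`. -/
def ctrlComp (P Q W : M3) : M3 := P ∘L W ∘L (ContinuousLinearMap.adjoint Q)

/-- Compensated Riemann sum
`Σ_i [ Y_{t_i} ⊗ (Z_{t_{i+1}} - Z_{t_i}) + Y'_{t_i} Z'_{t_i} 𝕏²_{t_{i+1} t_i} ]`
for the rough integral `∫ Y ⊗ dZ` of two weakly controlled paths. -/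
def roughPairRS (XX : ℝ → ℝ → M3) (Y Z : ℝ → E3) (Y' Z' : ℝ → M3)
    {a b : ℝ} (P : Ptn a b) : M3 :=
  ∑ i ∈ Finset.range P.n,
    (oProd (Y (P.t i)) (Z (P.t (i + 1)) - Z (P.t i))
      + ctrlComp (Y' (P.t i)) (Z' (P.t i)) (XX (P.t (i + 1)) (P.t i)))

/-- The contraction `Σ_{k,l} W^{kl} (W'(e_k))(Z'(e_l))`, the compensator of a matrix-valued
controlled integrand `W` (with controlled derivative `W'`) against `dZ`. -/
def comp2 (W' : E3 →L[ℝ] M3) (Z' : M3) (W : M3) : E3 :=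
  ∑ k : Fin 3, ∑ l : Fin 3, ecomp k (W (e3 l)) • (W' (e3 k)) (Z' (e3 l))

/-- Compensated Riemann sum for the rough line integral `∫_0^1 A(x - Z_η) dZ_η` along a path
`Z` weakly controlled by `X`, the integrand `η ↦ A(x - Z_η)` having controlled derivative
`-∇A(x - Z_η) ∘ Z'_η`. -/
def roughVelRS (A : E3 → M3) (XX : ℝ → ℝ → M3) (Z : ℝ → E3) (Z' : ℝ → M3)
    (x : E3) {a b : ℝ} (P : Ptn a b) : E3 :=
  ∑ i ∈ Finset.range P.n,
    (A (x - Z (P.t i)) (Z (P.t (i + 1)) - Z (P.t i))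
      + comp2 (-((fderiv ℝ A (x - Z (P.t i))).comp (Z' (P.t i)))) (Z' (P.t i))
          (XX (P.t (i + 1)) (P.t i)))

/-- `V = V^Z` is the rough velocity field `V^Z(x) = ∫_0^1 A(x - Z_η) dZ_η`, each value being
the limit of compensated Riemann sums. -/
def IsRoughVelocity (A : E3 → M3) (XX : ℝ → ℝ → M3) (Z : ℝ → E3) (Z' : ℝ → M3)
    (V : E3 → E3) : Prop :=
  ∀ x : E3, RSLimit 0 1 (fun P => roughVelRS A XX Z Z' x P) (V x)

/-- Continuity of `t ↦ (Y(t), Y'(t))` from `[0,T]` into `𝒟_X` (with the norm `‖·‖_D^*`). -/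
def ContDT (γ T : ℝ) (X : ℝ → E3) (Y : ℝ → ℝ → E3) (Y' : ℝ → ℝ → M3) : Prop :=
  ∀ t ∈ Icc 0 T, ∀ ε > 0, ∃ δ > 0, ∀ s ∈ Icc 0 T, |s - t| ≤ δ →
    dnormStar γ X (fun ξ => Y s ξ - Y t ξ) (fun ξ => Y' s ξ - Y' t ξ) ≤ ε

/-- Membership in `𝐃_{X,T} = C([0,T], 𝒟_X)`. -/
def MemDT (γ T : ℝ) (X : ℝ → E3) (Y : ℝ → ℝ → E3) (Y' : ℝ → ℝ → M3) : Prop :=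
  (∀ t ∈ Icc 0 T, IsControlled γ X (Y t) (Y' t)) ∧ ContDT γ T X Y Y'

/-- The norm `‖Y‖_{𝐃_{X,T}} = sup_{t ∈ [0,T]} ‖Y(t)‖_D^*`. -/
def dxnorm (γ T : ℝ) (X : ℝ → E3) (Y : ℝ → ℝ → E3) (Y' : ℝ → ℝ → M3) : ℝ :=
  sSup {r | ∃ t ∈ Icc 0 T, r = dnormStar γ X (Y t) (Y' t)}

/-- `(Y, Y')` solves the vortex filament equation on `[0,T]` with initial condition `X`,
the velocity fields being given by rough line integrals over the rough path `(X, 𝕏²)`. -/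
def IsRoughSolution (T : ℝ) (A : E3 → M3) (X : ℝ → E3) (XX : ℝ → ℝ → M3)
    (Y : ℝ → ℝ → E3) (Y' : ℝ → ℝ → M3) : Prop :=
  ∃ v : ℝ → E3 → E3,
    (∀ s ∈ Icc 0 T, IsRoughVelocity A XX (Y s) (Y' s) (v s)) ∧
    (∀ t ∈ Icc 0 T, ∀ ξ ∈ Icc (0:ℝ) 1, Y t ξ = X ξ + ∫ s in (0:ℝ)..t, v s (Y s ξ)) ∧
    (∀ t ∈ Icc 0 T, ∀ ξ ∈ Icc (0:ℝ) 1, Y' t ξ = Fmap' v Y Y' t ξ)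

/-- `YY` is the lift (area process) `𝕐²_{ab} = ∫_a^b (Y_η - Y_a) ⊗ dY_η` of the weakly
controlled path `(Y, Y')`, defined through compensated Riemann sums. -/
def IsLift (XX : ℝ → ℝ → M3) (Y : ℝ → E3) (Y' : ℝ → M3) (YY : ℝ → ℝ → M3) : Prop :=
  ∀ a ∈ Icc (0:ℝ) 1, ∀ b ∈ Icc (0:ℝ) 1, a ≤ b →
    RSLimit a b (fun P => ∑ i ∈ Finset.range P.n,
      (oProd (Y (P.t i) - Y a) (Y (P.t (i + 1)) - Y (P.t i))
        + ctrlComp (Y' (P.t i)) (Y' (P.t i)) (XX (P.t (i + 1)) (P.t i)))) (YY a b)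

/-- `ε`-approximation `ξ ↦ ∫_0^ξ (U_{ρ+ε} - U_ρ)(W_{ρ+ε} - W_ρ) dρ / ε` of the covariation
(the processes being extended by their value at `1`). -/
def covApprox (U W : ℝ → ℝ) (ε ξ : ℝ) : ℝ :=
  ∫ ρ in (0:ℝ)..ξ, (U (min (ρ + ε) 1) - U ρ) * (W (min (ρ + ε) 1) - W ρ) / ε

/-- `C = [U, W]` is the covariation of the processes `U` and `W`: the `ε`-approximations
converge uniformly in probability (ucp) as `ε → 0⁺`. -/
def HasCovariation {Ω : Type*} [MeasurableSpace Ω] (P : Measure Ω)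
    (U W : Ω → ℝ → ℝ) (C : Ω → ℝ → ℝ) : Prop :=
  ∀ δ : ℝ, 0 < δ →
    Tendsto (fun ε : ℝ =>
        P {ω | δ ≤ ⨆ ξ : Icc (0:ℝ) 1, |covApprox (U ω) (W ω) ε ξ.1 - C ω ξ.1|})
      (𝓝[>] (0:ℝ)) (𝓝 (0:ℝ≥0∞))

/-! ### Finite differences of smooth maps -/

section FiniteDifferences

variable {G : Type*} [NormedAddCommGroup G] [NormedSpace ℝ G]

/-- If `u, v` have norm at most `m`, so does every point of the segment joining them. -/
lemma norm_add_smul_sub_le {u v : E3} {m : ℝ} (hu : ‖u‖ ≤ m) (hv : ‖v‖ ≤ m)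
    {θ : ℝ} (h0 : 0 ≤ θ) (h1 : θ ≤ 1) : ‖v + θ • (u - v)‖ ≤ m := by
  have h : v + θ • (u - v) = (1 - θ) • v + θ • u := by module
  rw [h]
  calc ‖(1 - θ) • v + θ • u‖ ≤ ‖(1 - θ) • v‖ + ‖θ • u‖ := norm_add_le _ _
    _ = (1 - θ) * ‖v‖ + θ * ‖u‖ := by
        rw [norm_smul, norm_smul, Real.norm_of_nonneg h0, Real.norm_of_nonneg (by linarith)]
    _ ≤ (1 - θ) * m + θ * m := by
        gcongr
    _ = m := by ring

lemma hasDerivAt_comp_line {f : E3 → G} (hf : Differentiable ℝ f) (b h : E3) (θ : ℝ) :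
    HasDerivAt (fun θ : ℝ => f (b + θ • h)) (fderiv ℝ f (b + θ • h) h) θ := by
  have h1 : HasDerivAt (fun θ : ℝ => b + θ • h) h θ := by
    simpa using ((hasDerivAt_id θ).smul_const h).const_add b
  exact (hf (b + θ • h)).hasFDerivAt.comp_hasDerivAt θ h1

/-- Second order difference estimate: `f a - f b - f c + f d` is controlled by the second order
difference of the points and by the product of the two first order differences. -/
lemma four_point {f : E3 → G} (hf : Differentiable ℝ f) {L₁ L₂ : ℝ}
    (h1 : ∀ x, ‖fderiv ℝ f x‖ ≤ L₁)
    (h2 : ∀ x y, ‖fderiv ℝ f x - fderiv ℝ f y‖ ≤ L₂ * ‖x - y‖) (hL₂ : 0 ≤ L₂)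
    {a b c d : E3} {m k l : ℝ} (hac : ‖a - c‖ ≤ m) (hbd : ‖b - d‖ ≤ m) (hab : ‖a - b‖ ≤ k)
    (hl : ‖a - b - c + d‖ ≤ l) :
    ‖f a - f b - f c + f d‖ ≤ L₁ * l + L₂ * m * k := by
  have hL₁ : 0 ≤ L₁ := (norm_nonneg _).trans (h1 0)
  have hm : 0 ≤ m := (norm_nonneg _).trans hac
  have key := norm_image_sub_le_of_norm_deriv_le_segment_01'
    (f := fun θ : ℝ => f (b + θ • (a - b)) - f (d + θ • (c - d)))
    (f' := fun θ : ℝ => fderiv ℝ f (b + θ • (a - b)) (a - b)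
      - fderiv ℝ f (d + θ • (c - d)) (c - d)) (C := L₁ * l + L₂ * m * k)
    (fun θ _ => ((hasDerivAt_comp_line hf b (a - b) θ).sub
      (hasDerivAt_comp_line hf d (c - d) θ)).hasDerivWithinAt) ?_
  · convert key using 2
    simp
    abel
  · rintro θ ⟨h0, h1'⟩
    have e : fderiv ℝ f (b + θ • (a - b)) (a - b) - fderiv ℝ f (d + θ • (c - d)) (c - d)
        = fderiv ℝ f (d + θ • (c - d)) (a - b - c + d)
          + (fderiv ℝ f (b + θ • (a - b)) - fderiv ℝ f (d + θ • (c - d))) (a - b) := by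
      simp only [map_sub, map_add, sub_apply]
      abel
    have hpt : ‖(b + θ • (a - b)) - (d + θ • (c - d))‖ ≤ m := by
      have : (b + θ • (a - b)) - (d + θ • (c - d)) = (b - d) + θ • ((a - c) - (b - d)) := by
        module
      rw [this]
      exact norm_add_smul_sub_le hac hbd h0 h1'.le
    rw [e]
    refine (norm_add_le _ _).trans (add_le_add ?_ ?_)
    · exact (ContinuousLinearMap.le_opNorm _ _).trans
        (mul_le_mul (h1 _) hl (norm_nonneg _) hL₁)
    · refine (ContinuousLinearMap.le_opNorm _ _).trans
        (mul_le_mul ?_ hab (norm_nonneg _) (by positivity))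
      exact (h2 _ _).trans (mul_le_mul_of_nonneg_left hpt hL₂)

/-- Third order difference estimate along two directions `h`, `h'`: the second order difference
of `u ↦ f (u + h) - f u`, with the direction changing from `h` to `h'` along two of the four
points. -/
lemma eight_point {f : E3 → G} (hf : Differentiable ℝ f) (hf' : Differentiable ℝ (fderiv ℝ f))
    {N : ℝ} (h2 : ∀ x, ‖fderiv ℝ (fderiv ℝ f) x‖ ≤ N)
    (h3 : ∀ x y, ‖fderiv ℝ (fderiv ℝ f) x - fderiv ℝ (fderiv ℝ f) y‖ ≤ N * ‖x - y‖)
    {u ut w wt h h' : E3} {m k l p q : ℝ}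
    (huw : ‖u - w‖ ≤ m) (huwt : ‖ut - wt‖ ≤ m)
    (hk₀ : ‖u - ut‖ ≤ k) (hk₁ : ‖u + h - (ut + h')‖ ≤ k)
    (hl : ‖u - ut - w + wt‖ ≤ l) (hp : ‖h‖ ≤ p) (hq : ‖h - h'‖ ≤ q) :
    ‖(f (u + h) - f (ut + h') - f (w + h) + f (wt + h')) - (f u - f ut - f w + f wt)‖
      ≤ (N * l + N * m * k) * p + N * m * q := by
  have hN : 0 ≤ N := (norm_nonneg (fderiv ℝ (fderiv ℝ f) 0)).trans (h2 0)
  have hm : 0 ≤ m := (norm_nonneg _).trans huw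
  have hk : 0 ≤ k := (norm_nonneg _).trans hk₀
  have hl0 : 0 ≤ l := (norm_nonneg _).trans hl
  have hlip : ∀ x y, ‖fderiv ℝ f x - fderiv ℝ f y‖ ≤ N * ‖x - y‖ := fun x y =>
    convex_univ.norm_image_sub_le_of_norm_fderiv_le (𝕜 := ℝ) (fun z _ => hf' z)
      (fun z _ => h2 z) (mem_univ _) (mem_univ _)
  have key := norm_image_sub_le_of_norm_deriv_le_segment_01'
    (f := fun θ : ℝ => f (u + θ • h) - f (ut + θ • h') - f (w + θ • h) + f (wt + θ • h'))
    (f' := fun θ : ℝ => fderiv ℝ f (u + θ • h) h - fderiv ℝ f (ut + θ • h') h'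
      - fderiv ℝ f (w + θ • h) h + fderiv ℝ f (wt + θ • h') h')
    (C := (N * l + N * m * k) * p + N * m * q)
    (fun θ _ => ((((hasDerivAt_comp_line hf u h θ).sub (hasDerivAt_comp_line hf ut h' θ)).sub
      (hasDerivAt_comp_line hf w h θ)).add (hasDerivAt_comp_line hf wt h' θ)).hasDerivWithinAt) ?_
  · simpa using key
  · rintro θ ⟨h0, h1'⟩
    set a := u + θ • h with ha
    set b := ut + θ • h' with hb
    set c := w + θ • h with hc
    set d := wt + θ • h' with hd
    have e : fderiv ℝ f a h - fderiv ℝ f b h' - fderiv ℝ f c h + fderiv ℝ f d h'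
        = (fderiv ℝ f a - fderiv ℝ f b - fderiv ℝ f c + fderiv ℝ f d) h
          + (fderiv ℝ f b - fderiv ℝ f d) (h - h') := by
      simp only [map_sub, sub_apply, add_apply]
      abel
    have hac : a - c = u - w := by rw [ha, hc]; abel
    have hbd : b - d = ut - wt := by rw [hb, hd]; abel
    have hab : ‖a - b‖ ≤ k := by
      have : a - b = (u - ut) + θ • ((u + h - (ut + h')) - (u - ut)) := by
        rw [ha, hb]; module
      rw [this]
      exact norm_add_smul_sub_le hk₁ hk₀ h0 h1'.le
    have habcd : a - b - c + d = u - ut - w + wt := by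
      rw [ha, hb, hc, hd]; abel
    have h4 := four_point hf' h2 h3 hN (hac ▸ huw) (hbd ▸ huwt) hab (habcd ▸ hl)
    rw [e]
    refine (norm_add_le _ _).trans (add_le_add ?_ ?_)
    · exact (ContinuousLinearMap.le_opNorm _ _).trans
        (mul_le_mul h4 hp (norm_nonneg _) (by positivity))
    · refine (ContinuousLinearMap.le_opNorm _ _).trans
        (mul_le_mul ?_ hq (norm_nonneg _) (by positivity))
      refine (hlip _ _).trans (mul_le_mul_of_nonneg_left ?_ hN)
      exact hbd ▸ huwt

end FiniteDifferences

/-! ### Dyadic sums and the Young estimate -/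

/-- Left-point Riemann–Stieltjes sum of `∫_0^1 f dg` along the `n`-th dyadic partition. -/
def dySum (f : ℝ → M3) (g : ℝ → E3) (n : ℕ) : E3 :=
  ∑ k ∈ Finset.range (2 ^ n),
    f ((k : ℝ) / 2 ^ n) (g (((k + 1 : ℕ) : ℝ) / 2 ^ n) - g ((k : ℝ) / 2 ^ n))

/-- The `n`-th dyadic partition of `[0,1]`. -/
def dyPtn (n : ℕ) : Ptn 0 1 where
  n := 2 ^ n
  t := fun k => (k : ℝ) / 2 ^ n
  first := by simp
  last := by simp
  mono := fun i _ => by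
    gcongr
    exact Nat.le_succ i

lemma youngRS_dyPtn (A : E3 → M3) (Z : ℝ → E3) (x : E3) (n : ℕ) :
    youngRS A Z x (dyPtn n) = dySum (fun ρ => A (x - Z ρ)) Z n := rfl

lemma tendsto_dySum {A : E3 → M3} {Z : ℝ → E3} {V : E3 → E3} (h : IsYoungVelocity A Z V)
    (x : E3) : Tendsto (dySum (fun ρ => A (x - Z ρ)) Z) atTop (𝓝 (V x)) := by
  rw [Metric.tendsto_atTop]
  intro ε hε
  obtain ⟨δ, hδ, hP⟩ := h x (ε / 2) (by linarith)
  obtain ⟨n₀, hn₀⟩ := exists_pow_lt_of_lt_one hδ (by norm_num : (1 / 2 : ℝ) < 1)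
  refine ⟨n₀, fun n hn => ?_⟩
  have hmesh : (dyPtn n).MeshLE δ := by
    intro i _
    have h1 : (dyPtn n).t (i + 1) - (dyPtn n).t i = (1 / 2 : ℝ) ^ n := by
      simp only [dyPtn]
      push_cast
      rw [one_div, inv_pow]
      field_simp
      ring
    rw [h1]
    exact (pow_le_pow_of_le_one (by norm_num) (by norm_num) hn).trans hn₀.le
  have : ‖youngRS A Z x (dyPtn n) - V x‖ ≤ ε / 2 := hP (dyPtn n) hmesh
  rw [youngRS_dyPtn] at this
  rw [dist_eq_norm]
  linarith

lemma dySum_sub_left (f₁ f₂ : ℝ → M3) (g : ℝ → E3) (n : ℕ) :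
    dySum (fun ρ => f₁ ρ - f₂ ρ) g n = dySum f₁ g n - dySum f₂ g n := by
  simp [dySum, Finset.sum_sub_distrib]

lemma dySum_sub_right (f : ℝ → M3) (g₁ g₂ : ℝ → E3) (n : ℕ) :
    dySum f (fun ρ => g₁ ρ - g₂ ρ) n = dySum f g₁ n - dySum f g₂ n := by
  simp only [dySum, ← Finset.sum_sub_distrib, ← map_sub]
  refine Finset.sum_congr rfl fun k _ => ?_
  congr 1
  abel

lemma sum_range_two_mul {G : Type*} [AddCommMonoid G] (h : ℕ → G) (m : ℕ) :
    ∑ k ∈ Finset.range (2 * m), h k = ∑ k ∈ Finset.range m, (h (2 * k) + h (2 * k + 1)) := by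
  induction m with
  | zero => simp
  | succ m ih =>
    rw [Finset.sum_range_succ, ← ih, show 2 * (m + 1) = 2 * m + 1 + 1 by ring,
      Finset.sum_range_succ, Finset.sum_range_succ, add_assoc]

/-- Ratio of the geometric series dominating the dyadic refinement errors. It is less than one
exactly when `γ > 1/2`. -/
def yRatio (γ : ℝ) : ℝ := 2 * ((1 / 2 : ℝ) ^ γ) ^ 2

/-- The constant in the Young estimate. -/
def yConst (γ : ℝ) : ℝ := (1 - yRatio γ)⁻¹

lemma yRatio_pos (γ : ℝ) : 0 < yRatio γ := by unfold yRatio; positivity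

lemma yRatio_lt_one {γ : ℝ} (hγ : 1 / 2 < γ) : yRatio γ < 1 := by
  have h : ((1 / 2 : ℝ) ^ γ) ^ 2 < 1 / 2 := by
    rw [← Real.rpow_natCast, ← Real.rpow_mul (by norm_num)]
    calc (1 / 2 : ℝ) ^ (γ * (2 : ℕ)) < (1 / 2 : ℝ) ^ (1 : ℝ) :=
          Real.rpow_lt_rpow_of_exponent_gt (by norm_num) (by norm_num) (by push_cast; linarith)
      _ = 1 / 2 := Real.rpow_one _
  unfold yRatio
  linarith

lemma one_le_yConst {γ : ℝ} (hγ : 1 / 2 < γ) : 1 ≤ yConst γ := by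
  have h1 := yRatio_lt_one hγ
  have h2 := yRatio_pos γ
  unfold yConst
  exact (one_le_inv₀ (by linarith)).2 (by linarith)

/-- Passing from level `n` to level `n + 1` changes the dyadic sum by `2 ^ n` terms
`(f m - f l) (g r - g m)`, each of size `a b 2 ^ (-2 γ (n + 1))`. -/
lemma norm_dySum_succ_sub_le {γ : ℝ} {f : ℝ → M3} {g : ℝ → E3} {a b : ℝ} (ha : 0 ≤ a)
    (hb : 0 ≤ b)
    (hf : ∀ s ∈ Icc (0:ℝ) 1, ∀ t ∈ Icc (0:ℝ) 1, ‖f s - f t‖ ≤ a * |s - t| ^ γ)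
    (hg : ∀ s ∈ Icc (0:ℝ) 1, ∀ t ∈ Icc (0:ℝ) 1, ‖g s - g t‖ ≤ b * |s - t| ^ γ) (hγ : 0 ≤ γ)
    (n : ℕ) : ‖dySum f g (n + 1) - dySum f g n‖ ≤ a * b * yRatio γ ^ n := by
  set p : ℝ := (1 / 2 : ℝ) ^ γ with hp
  have hp0 : 0 ≤ p := by positivity
  have hp1 : p ≤ 1 := Real.rpow_le_one (by norm_num) (by norm_num) hγ
  have hstep : ((1 / 2 : ℝ) ^ (n + 1)) ^ γ = p ^ (n + 1) := by
    rw [hp, ← Real.rpow_natCast, ← Real.rpow_mul (by norm_num), mul_comm,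
      Real.rpow_mul (by norm_num), Real.rpow_natCast]
  have e : dySum f g (n + 1) - dySum f g n = ∑ k ∈ Finset.range (2 ^ n),
      (f (((2 * k + 1 : ℕ) : ℝ) / 2 ^ (n + 1)) - f (((2 * k : ℕ) : ℝ) / 2 ^ (n + 1)))
        (g (((2 * k + 1 + 1 : ℕ) : ℝ) / 2 ^ (n + 1))
          - g (((2 * k + 1 : ℕ) : ℝ) / 2 ^ (n + 1))) := by
    unfold dySum
    rw [pow_succ' 2 n, sum_range_two_mul, ← Finset.sum_sub_distrib]
    refine Finset.sum_congr rfl fun k _ => ?_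
    have h1 : (k : ℝ) / 2 ^ n = ((2 * k : ℕ) : ℝ) / (2 * 2 ^ n) := by
      push_cast
      field_simp
    have h2 : ((k + 1 : ℕ) : ℝ) / 2 ^ n = ((2 * k + 1 + 1 : ℕ) : ℝ) / (2 * 2 ^ n) := by
      push_cast
      field_simp
      ring
    rw [h1, h2, ← pow_succ' (2 : ℝ) n]
    simp only [map_sub, sub_apply]
    abel
  have hterm : ∀ k ∈ Finset.range (2 ^ n),
      ‖(f (((2 * k + 1 : ℕ) : ℝ) / 2 ^ (n + 1)) - f (((2 * k : ℕ) : ℝ) / 2 ^ (n + 1)))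
        (g (((2 * k + 1 + 1 : ℕ) : ℝ) / 2 ^ (n + 1))
          - g (((2 * k + 1 : ℕ) : ℝ) / 2 ^ (n + 1)))‖
        ≤ a * b * (p ^ 2) ^ n := by
    intro k hk
    rw [Finset.mem_range] at hk
    have hmem : ∀ j : ℕ, j ≤ 2 * k + 2 → (j : ℝ) / 2 ^ (n + 1) ∈ Icc (0:ℝ) 1 := by
      intro j hj
      refine ⟨by positivity, (div_le_one (by positivity)).2 ?_⟩
      have : j ≤ 2 ^ (n + 1) := by rw [pow_succ]; omega
      exact_mod_cast this
    have hd : ∀ j : ℕ, |((j + 1 : ℕ) : ℝ) / 2 ^ (n + 1) - (j : ℝ) / 2 ^ (n + 1)| ^ γ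
        = p ^ (n + 1) := by
      intro j
      rw [← hstep]
      congr 1
      rw [← sub_div]
      push_cast
      rw [add_sub_cancel_left, abs_of_nonneg (by positivity), one_div, one_div, inv_pow]
    have h1 := hf _ (hmem (2 * k + 1) (by omega)) _ (hmem (2 * k) (by omega))
    have h2 := hg _ (hmem (2 * k + 1 + 1) (by omega)) _ (hmem (2 * k + 1) (by omega))
    rw [hd] at h1 h2
    calc _ ≤ (a * p ^ (n + 1)) * (b * p ^ (n + 1)) :=
          (ContinuousLinearMap.le_opNorm _ _).trans
            (mul_le_mul h1 h2 (norm_nonneg _) (by positivity))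
      _ = a * b * (p ^ 2) ^ n * p ^ 2 := by ring
      _ ≤ a * b * (p ^ 2) ^ n * 1 := by
          gcongr
          exact pow_le_one₀ hp0 hp1
      _ = _ := mul_one _
  rw [e]
  refine (norm_sum_le_of_le _ hterm).trans (le_of_eq ?_)
  rw [Finset.sum_const, Finset.card_range, nsmul_eq_mul, yRatio, mul_pow, ← hp]
  push_cast
  ring

/-- Young estimate for the dyadic sums along a closed path `g`. -/
lemma norm_dySum_le {γ : ℝ} (hγ : 1 / 2 < γ) {f : ℝ → M3} {g : ℝ → E3} {a b : ℝ} (ha : 0 ≤ a)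
    (hb : 0 ≤ b)
    (hf : ∀ s ∈ Icc (0:ℝ) 1, ∀ t ∈ Icc (0:ℝ) 1, ‖f s - f t‖ ≤ a * |s - t| ^ γ)
    (hg : ∀ s ∈ Icc (0:ℝ) 1, ∀ t ∈ Icc (0:ℝ) 1, ‖g s - g t‖ ≤ b * |s - t| ^ γ)
    (hg01 : g 0 = g 1) (n : ℕ) : ‖dySum f g n‖ ≤ yConst γ * a * b := by
  have hq0 := yRatio_pos γ
  have hq1 := yRatio_lt_one hγ
  have hq : 0 < 1 - yRatio γ := by linarith
  have hn : ‖dySum f g n‖ ≤ a * b * ((1 - yRatio γ ^ n) * yConst γ) := by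
    induction n with
    | zero => simp [dySum, hg01]
    | succ n ih =>
      have h := norm_dySum_succ_sub_le ha hb hf hg (by linarith) n
      have e : a * b * ((1 - yRatio γ ^ (n + 1)) * yConst γ)
          = a * b * ((1 - yRatio γ ^ n) * yConst γ) + a * b * yRatio γ ^ n := by
        unfold yConst
        field_simp
        ring
      rw [e]
      calc ‖dySum f g (n + 1)‖
          = ‖dySum f g n + (dySum f g (n + 1) - dySum f g n)‖ := by rw [add_sub_cancel]
        _ ≤ _ := (norm_add_le _ _).trans (add_le_add ih h)
  have hK : 0 ≤ yConst γ := zero_le_one.trans (one_le_yConst hγ)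
  calc ‖dySum f g n‖ ≤ a * b * ((1 - yRatio γ ^ n) * yConst γ) := hn
    _ ≤ a * b * (1 * yConst γ) := by
        gcongr
        linarith [pow_pos hq0 n]
    _ = _ := by ring

/-! ### Velocity fields -/

/-- `Z` satisfies the `γ`-Hölder bound on `[0,1]` with the explicit constant `R`. -/
def HolderBd {F : Type*} [NormedAddCommGroup F] (γ R : ℝ) (Z : ℝ → F) : Prop :=
  ∀ s ∈ Icc (0:ℝ) 1, ∀ t ∈ Icc (0:ℝ) 1, ‖Z s - Z t‖ ≤ R * |s - t| ^ γ

/-- Derivative bounds extracted from `‖∇A‖_2 ≤ N`: the first and second derivatives of `A` are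
bounded by `N`, and the bound on the third one is recorded as a Lipschitz bound on the second. -/
structure DerivBdd {G : Type*} [NormedAddCommGroup G] [NormedSpace ℝ G] (A : E3 → G)
    (N : ℝ) : Prop where
  diff : Differentiable ℝ A
  diff' : Differentiable ℝ (fderiv ℝ A)
  bdd₁ : ∀ x, ‖fderiv ℝ A x‖ ≤ N
  bdd₂ : ∀ x, ‖fderiv ℝ (fderiv ℝ A) x‖ ≤ N
  lip₂ : ∀ x y, ‖fderiv ℝ (fderiv ℝ A) x - fderiv ℝ (fderiv ℝ A) y‖ ≤ N * ‖x - y‖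

lemma DerivBdd.nonneg {G : Type*} [NormedAddCommGroup G] [NormedSpace ℝ G] {A : E3 → G}
    {N : ℝ} (h : DerivBdd A N) : 0 ≤ N :=
  (norm_nonneg (fderiv ℝ A 0)).trans (h.bdd₁ 0)

lemma DerivBdd.lip₀ {G : Type*} [NormedAddCommGroup G] [NormedSpace ℝ G] {A : E3 → G}
    {N : ℝ} (h : DerivBdd A N) (x y : E3) :
    ‖A x - A y‖ ≤ N * ‖x - y‖ :=
  convex_univ.norm_image_sub_le_of_norm_fderiv_le (𝕜 := ℝ) (fun z _ => h.diff z)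
    (fun z _ => h.bdd₁ z) (mem_univ _) (mem_univ _)

lemma DerivBdd.lip₁ {G : Type*} [NormedAddCommGroup G] [NormedSpace ℝ G] {A : E3 → G}
    {N : ℝ} (h : DerivBdd A N) (x y : E3) :
    ‖fderiv ℝ A x - fderiv ℝ A y‖ ≤ N * ‖x - y‖ :=
  convex_univ.norm_image_sub_le_of_norm_fderiv_le (𝕜 := ℝ) (fun z _ => h.diff' z)
    (fun z _ => h.bdd₂ z) (mem_univ _) (mem_univ _)

lemma tnorm_nonneg {F : Type*} [NormedAddCommGroup F] [NormedSpace ℝ F] (j : ℕ) (φ : E3 → F) :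
    0 ≤ tnorm j φ :=
  Real.sSup_nonneg (by rintro _ ⟨x, rfl⟩; exact norm_nonneg _)

lemma norm_fderiv_fderiv {G : Type*} [NormedAddCommGroup G] [NormedSpace ℝ G] (f : E3 → G)
    (x : E3) : ‖fderiv ℝ (fderiv ℝ f) x‖ = ‖iteratedFDeriv ℝ 2 f x‖ := by
  rw [← norm_iteratedFDeriv_one, norm_iteratedFDeriv_fderiv]

lemma fderiv_lipschitz {G : Type*} [NormedAddCommGroup G] [NormedSpace ℝ G] {f : E3 → G} {N : ℝ}
    (hf : ContDiff ℝ 2 f) (h : ∀ x, ‖iteratedFDeriv ℝ 2 f x‖ ≤ N) (x y : E3) :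
    ‖fderiv ℝ f x - fderiv ℝ f y‖ ≤ N * ‖x - y‖ := by
  have c : ContDiff ℝ 1 (fderiv ℝ f) := hf.fderiv_right (by norm_num)
  exact convex_univ.norm_image_sub_le_of_norm_fderiv_le (𝕜 := ℝ)
    (fun z _ => c.differentiable (by norm_num) z)
    (fun z _ => (norm_fderiv_fderiv f z).trans_le (h z)) (mem_univ _) (mem_univ _)

lemma NablaBdd.derivBdd {G : Type*} [NormedAddCommGroup G] [NormedSpace ℝ G] {A : E3 → G}
    (h : NablaBdd 1 2 A) : DerivBdd A (nablaNorm 1 2 A) := by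
  obtain ⟨hc, hb⟩ := h
  have hc3 : ContDiff ℝ 3 A := by
    convert hc using 1
    norm_num
  have hN : nablaNorm 1 2 A = tnorm 1 A + tnorm 2 A + tnorm 3 A := by
    simp [nablaNorm, Finset.sum_range_succ]
  have t1 := tnorm_nonneg 1 A
  have t2 := tnorm_nonneg 2 A
  have t3 := tnorm_nonneg 3 A
  have b : ∀ k : ℕ, 1 ≤ k → k ≤ 3 → ∀ x, ‖iteratedFDeriv ℝ k A x‖ ≤ tnorm k A :=
    fun k h1 h2 x => le_csSup (hb k h1 (by omega)) ⟨x, rfl⟩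
  have c1 : ContDiff ℝ 2 (fderiv ℝ A) := hc3.fderiv_right (by norm_num)
  refine ⟨hc3.differentiable (by norm_num), c1.differentiable (by norm_num), fun x => ?_,
    fun x => ?_, fun x y => ?_⟩
  · rw [← norm_iteratedFDeriv_one]
    linarith [b 1 le_rfl (by norm_num) x]
  · rw [norm_fderiv_fderiv]
    linarith [b 2 (by norm_num) (by norm_num) x]
  · refine fderiv_lipschitz c1 (fun z => ?_) x y
    rw [norm_iteratedFDeriv_fderiv]
    linarith [b 3 (by norm_num) le_rfl z]

section Velocity

variable {γ N R δ : ℝ} {A : E3 → M3} {Z Zt : ℝ → E3} {V Vt : E3 → E3}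

/-- Uniform distance between the velocities transported along two curves. -/
lemma velocity_sub_le (hγ : 1 / 2 < γ) (hA : DerivBdd A N) (hR : 0 ≤ R) (hδ : 0 ≤ δ)
    (hZ : HolderBd γ R Z) (hZt : HolderBd γ R Zt) (hd : HolderBd γ δ (fun ξ => Z ξ - Zt ξ))
    (hs : ∀ ξ ∈ Icc (0:ℝ) 1, ‖Z ξ - Zt ξ‖ ≤ δ) (h01 : Z 0 = Z 1) (h01t : Zt 0 = Zt 1)
    (hV : IsYoungVelocity A Z V) (hVt : IsYoungVelocity A Zt Vt) {ξ : ℝ}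
    (hξ : ξ ∈ Icc (0:ℝ) 1) :
    ‖V (Z ξ) - Vt (Zt ξ)‖ ≤ 2 * yConst γ * N * (1 + R) ^ 3 * δ := by
  have hN := hA.nonneg
  have hK : 0 ≤ yConst γ := zero_le_one.trans (one_le_yConst hγ)
  refine le_of_tendsto ((tendsto_dySum hV (Z ξ)).sub (tendsto_dySum hVt (Zt ξ))).norm
    (Eventually.of_forall fun n => ?_)
  have e : dySum (fun ρ => A (Z ξ - Z ρ)) Z n - dySum (fun ρ => A (Zt ξ - Zt ρ)) Zt n
      = dySum (fun ρ => A (Z ξ - Z ρ) - A (Zt ξ - Zt ρ)) Z n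
        + dySum (fun ρ => A (Zt ξ - Zt ρ)) (fun ρ => Z ρ - Zt ρ) n := by
    rw [dySum_sub_left, dySum_sub_right]
    abel
  have h1 : ‖dySum (fun ρ => A (Z ξ - Z ρ) - A (Zt ξ - Zt ρ)) Z n‖
      ≤ yConst γ * (N * δ + N * R * (2 * δ)) * R := by
    refine norm_dySum_le hγ (by positivity) hR (fun s hs' t ht => ?_) hZ h01 n
    have h4 := four_point hA.diff hA.bdd₁ hA.lip₁ hN
      (a := Z ξ - Z s) (b := Zt ξ - Zt s) (c := Z ξ - Z t) (d := Zt ξ - Zt t)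
      (m := R * |s - t| ^ γ) (k := 2 * δ) (l := δ * |s - t| ^ γ)
      (by
        rw [show Z ξ - Z s - (Z ξ - Z t) = -(Z s - Z t) by abel, norm_neg]
        exact hZ s hs' t ht)
      (by
        rw [show Zt ξ - Zt s - (Zt ξ - Zt t) = -(Zt s - Zt t) by abel, norm_neg]
        exact hZt s hs' t ht)
      (by
        rw [show Z ξ - Z s - (Zt ξ - Zt s) = (Z ξ - Zt ξ) - (Z s - Zt s) by abel]
        linarith [norm_sub_le (Z ξ - Zt ξ) (Z s - Zt s), hs ξ hξ, hs s hs'])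
      (by
        rw [show Z ξ - Z s - (Zt ξ - Zt s) - (Z ξ - Z t) + (Zt ξ - Zt t)
          = -((Z s - Zt s) - (Z t - Zt t)) by abel, norm_neg]
        exact hd s hs' t ht)
    calc _ = ‖A (Z ξ - Z s) - A (Zt ξ - Zt s) - A (Z ξ - Z t) + A (Zt ξ - Zt t)‖ := by
          congr 1
          abel
      _ ≤ _ := h4
      _ = _ := by ring
  have h2 : ‖dySum (fun ρ => A (Zt ξ - Zt ρ)) (fun ρ => Z ρ - Zt ρ) n‖
      ≤ yConst γ * (N * R) * δ := by
    refine norm_dySum_le hγ (by positivity) hδ (fun s hs' t ht => ?_) hd (by rw [h01, h01t]) n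
    refine (hA.lip₀ _ _).trans ?_
    rw [show Zt ξ - Zt s - (Zt ξ - Zt t) = -(Zt s - Zt t) by abel, norm_neg, mul_assoc]
    exact mul_le_mul_of_nonneg_left (hZt s hs' t ht) hN
  rw [e]
  refine (norm_add_le _ _).trans ((add_le_add h1 h2).trans ?_)
  have hpoly : 0 ≤ 2 * (1 + R) ^ 3 - (2 * R + 2 * R ^ 2) := by
    have : 2 * (1 + R) ^ 3 - (2 * R + 2 * R ^ 2) = 2 + 4 * R + 4 * R ^ 2 + 2 * R ^ 3 := by ring
    rw [this]
    positivity
  have : 0 ≤ yConst γ * N * δ * (2 * (1 + R) ^ 3 - (2 * R + 2 * R ^ 2)) := by positivity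
  nlinarith [this]

/-- Hölder bound for the difference of the velocities transported along two curves. -/
lemma velocity_holder_sub_le (hγ : 1 / 2 < γ) (hA : DerivBdd A N) (hR : 0 ≤ R) (hδ : 0 ≤ δ)
    (hZ : HolderBd γ R Z) (hZt : HolderBd γ R Zt) (hd : HolderBd γ δ (fun ξ => Z ξ - Zt ξ))
    (hs : ∀ ξ ∈ Icc (0:ℝ) 1, ‖Z ξ - Zt ξ‖ ≤ δ) (h01 : Z 0 = Z 1) (h01t : Zt 0 = Zt 1)
    (hV : IsYoungVelocity A Z V) (hVt : IsYoungVelocity A Zt Vt) :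
    HolderBd γ (3 * yConst γ * N * (1 + R) ^ 3 * δ) (fun ξ => V (Z ξ) - Vt (Zt ξ)) := by
  intro ξ hξ η hη
  have hN := hA.nonneg
  have hK : 0 ≤ yConst γ := zero_le_one.trans (one_le_yConst hγ)
  set r : ℝ := |ξ - η| ^ γ with hr
  have hr0 : 0 ≤ r := by positivity
  refine le_of_tendsto (((tendsto_dySum hV (Z ξ)).sub (tendsto_dySum hVt (Zt ξ))).sub
    ((tendsto_dySum hV (Z η)).sub (tendsto_dySum hVt (Zt η)))).norm
    (Eventually.of_forall fun n => ?_)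
  have e : dySum (fun ρ => A (Z ξ - Z ρ)) Z n - dySum (fun ρ => A (Zt ξ - Zt ρ)) Zt n
        - (dySum (fun ρ => A (Z η - Z ρ)) Z n - dySum (fun ρ => A (Zt η - Zt ρ)) Zt n)
      = dySum (fun ρ => (A (Z ξ - Z ρ) - A (Zt ξ - Zt ρ)) - (A (Z η - Z ρ) - A (Zt η - Zt ρ))) Z n
        + dySum (fun ρ => A (Zt ξ - Zt ρ) - A (Zt η - Zt ρ)) (fun ρ => Z ρ - Zt ρ) n := by
    rw [dySum_sub_left (fun ρ => A (Z ξ - Z ρ) - A (Zt ξ - Zt ρ))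
      (fun ρ => A (Z η - Z ρ) - A (Zt η - Zt ρ))]
    simp only [dySum_sub_left, dySum_sub_right]
    abel
  have h1 : ‖dySum (fun ρ => (A (Z ξ - Z ρ) - A (Zt ξ - Zt ρ))
        - (A (Z η - Z ρ) - A (Zt η - Zt ρ))) Z n‖
      ≤ yConst γ * (((N * δ + N * R * (2 * δ)) * R + N * R * δ) * r) * R := by
    refine norm_dySum_le hγ (by positivity) hR (fun s hs' t ht => ?_) hZ h01 n
    have h8 := eight_point hA.diff hA.diff' hA.bdd₂ hA.lip₂
      (u := Z η - Z s) (ut := Zt η - Zt s) (w := Z η - Z t) (wt := Zt η - Zt t)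
      (h := Z ξ - Z η) (h' := Zt ξ - Zt η)
      (m := R * |s - t| ^ γ) (k := 2 * δ) (l := δ * |s - t| ^ γ) (p := R * r) (q := δ * r)
      (by
        rw [show Z η - Z s - (Z η - Z t) = -(Z s - Z t) by abel, norm_neg]
        exact hZ s hs' t ht)
      (by
        rw [show Zt η - Zt s - (Zt η - Zt t) = -(Zt s - Zt t) by abel, norm_neg]
        exact hZt s hs' t ht)
      (by
        rw [show Z η - Z s - (Zt η - Zt s) = (Z η - Zt η) - (Z s - Zt s) by abel]
        linarith [norm_sub_le (Z η - Zt η) (Z s - Zt s), hs η hη, hs s hs'])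
      (by
        rw [show Z η - Z s + (Z ξ - Z η) - (Zt η - Zt s + (Zt ξ - Zt η))
          = (Z ξ - Zt ξ) - (Z s - Zt s) by abel]
        linarith [norm_sub_le (Z ξ - Zt ξ) (Z s - Zt s), hs ξ hξ, hs s hs'])
      (by
        rw [show Z η - Z s - (Zt η - Zt s) - (Z η - Z t) + (Zt η - Zt t)
          = -((Z s - Zt s) - (Z t - Zt t)) by abel, norm_neg]
        exact hd s hs' t ht)
      (hZ ξ hξ η hη)
      (by
        rw [show Z ξ - Z η - (Zt ξ - Zt η) = (Z ξ - Zt ξ) - (Z η - Zt η) by abel]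
        exact hd ξ hξ η hη)
    have shift : ∀ a b c : E3, a - b + (c - a) = c - b := fun a b c => by abel
    simp only [shift] at h8
    calc _ = ‖(A (Z ξ - Z s) - A (Zt ξ - Zt s) - A (Z ξ - Z t) + A (Zt ξ - Zt t))
          - (A (Z η - Z s) - A (Zt η - Zt s) - A (Z η - Z t) + A (Zt η - Zt t))‖ := by
          congr 1
          abel
      _ ≤ _ := h8
      _ = _ := by ring
  have h2 : ‖dySum (fun ρ => A (Zt ξ - Zt ρ) - A (Zt η - Zt ρ)) (fun ρ => Z ρ - Zt ρ) n‖
      ≤ yConst γ * (N * R * R * r) * δ := by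
    refine norm_dySum_le hγ (by positivity) hδ (fun s hs' t ht => ?_) hd (by rw [h01, h01t]) n
    -- the four points form a parallelogram, so their second order difference vanishes
    have h4 := four_point hA.diff hA.bdd₁ hA.lip₁ hN
      (a := Zt ξ - Zt s) (b := Zt η - Zt s) (c := Zt ξ - Zt t) (d := Zt η - Zt t)
      (m := R * |s - t| ^ γ) (k := R * r) (l := 0)
      (by
        rw [show Zt ξ - Zt s - (Zt ξ - Zt t) = -(Zt s - Zt t) by abel, norm_neg]
        exact hZt s hs' t ht)
      (by
        rw [show Zt η - Zt s - (Zt η - Zt t) = -(Zt s - Zt t) by abel, norm_neg]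
        exact hZt s hs' t ht)
      (by
        rw [show Zt ξ - Zt s - (Zt η - Zt s) = Zt ξ - Zt η by abel]
        exact hZt ξ hξ η hη)
      (by
        rw [show Zt ξ - Zt s - (Zt η - Zt s) - (Zt ξ - Zt t) + (Zt η - Zt t) = 0 by abel,
          norm_zero])
    calc _ = ‖A (Zt ξ - Zt s) - A (Zt η - Zt s) - A (Zt ξ - Zt t) + A (Zt η - Zt t)‖ := by
          congr 1
          abel
      _ ≤ _ := h4
      _ = _ := by ring
  rw [e]
  refine (norm_add_le _ _).trans ((add_le_add h1 h2).trans ?_)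
  have hpoly : 0 ≤ 3 * (1 + R) ^ 3 - (3 * R ^ 2 + 2 * R ^ 3) := by
    have : 3 * (1 + R) ^ 3 - (3 * R ^ 2 + 2 * R ^ 3) = 3 + 9 * R + 6 * R ^ 2 + R ^ 3 := by ring
    rw [this]
    positivity
  have : 0 ≤ yConst γ * N * δ * r * (3 * (1 + R) ^ 3 - (3 * R ^ 2 + 2 * R ^ 3)) := by positivity
  nlinarith [this]

end Velocity

/-! ### The norms on `𝒞^γ` and `𝐗_T` -/

section Norms

variable {γ : ℝ} {Z W : ℝ → E3}

lemma sNorm_nonneg (Z : ℝ → E3) : 0 ≤ sNorm Z :=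
  Real.sSup_nonneg (by rintro _ ⟨s, _, rfl⟩; exact norm_nonneg _)

lemma hSemi_nonneg (γ : ℝ) (Z : ℝ → E3) : 0 ≤ hSemi γ Z :=
  Real.sSup_nonneg (by rintro _ ⟨s, _, t, _, _, rfl⟩; positivity)

lemma hStar_nonneg (γ : ℝ) (Z : ℝ → E3) : 0 ≤ hStar γ Z :=
  add_nonneg (sNorm_nonneg Z) (hSemi_nonneg γ Z)

lemma xnorm_nonneg (γ T : ℝ) (Y : ℝ → ℝ → E3) : 0 ≤ xnorm γ T Y :=
  Real.sSup_nonneg (by rintro _ ⟨t, _, rfl⟩; exact hStar_nonneg _ _)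

lemma sNorm_le {M : ℝ} (h : ∀ ξ ∈ Icc (0:ℝ) 1, ‖Z ξ‖ ≤ M) : sNorm Z ≤ M := by
  refine csSup_le ⟨_, 0, by simp, rfl⟩ ?_
  rintro _ ⟨s, hs, rfl⟩
  exact h s hs

lemma HolderBd.hSemi_le {M : ℝ} (h : HolderBd γ M Z) : hSemi γ Z ≤ M := by
  refine csSup_le ⟨_, 0, by simp, 1, by simp, by simp, rfl⟩ ?_
  rintro _ ⟨s, hs, t, ht, hst, rfl⟩
  have : 0 < |s - t| := abs_pos.2 (sub_ne_zero.2 hst)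
  exact (div_le_iff₀ (by positivity)).2 (h s hs t ht)

lemma MemC.norm_le (h : MemC γ Z) {ξ : ℝ} (hξ : ξ ∈ Icc (0:ℝ) 1) : ‖Z ξ‖ ≤ sNorm Z := by
  refine le_csSup ?_ ⟨ξ, hξ, rfl⟩
  obtain ⟨M, hM⟩ := isCompact_Icc.exists_bound_of_continuousOn h.1.1
  refine ⟨M, ?_⟩
  rintro _ ⟨s, hs, rfl⟩
  exact hM s hs

lemma MemC.holderBd (h : MemC γ Z) : HolderBd γ (hSemi γ Z) Z := by
  intro s hs t ht
  rcases eq_or_ne s t with rfl | hst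
  · simpa using mul_nonneg (hSemi_nonneg γ Z) (by positivity)
  have hpos : 0 < |s - t| := abs_pos.2 (sub_ne_zero.2 hst)
  refine (div_le_iff₀ (by positivity)).1 (le_csSup ?_ ⟨s, hs, t, ht, hst, rfl⟩)
  obtain ⟨C, hC⟩ := h.2
  refine ⟨C, ?_⟩
  rintro _ ⟨s, hs, t, ht, hst, rfl⟩
  have : 0 < |s - t| := abs_pos.2 (sub_ne_zero.2 hst)
  exact (div_le_iff₀ (by positivity)).2 (hC s hs t ht)

lemma HolderBd.mono {F : Type*} [NormedAddCommGroup F] {R R' : ℝ} {Z : ℝ → F}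
    (h : HolderBd γ R Z) (hR : R ≤ R') : HolderBd γ R' Z := fun s hs t ht =>
  (h s hs t ht).trans (mul_le_mul_of_nonneg_right hR (by positivity))

lemma HolderBd.add {R R' : ℝ} (h : HolderBd γ R Z) (h' : HolderBd γ R' W) :
    HolderBd γ (R + R') (fun ξ => Z ξ + W ξ) := by
  intro s hs t ht
  have e : Z s + W s - (Z t + W t) = (Z s - Z t) + (W s - W t) := by abel
  rw [e, add_mul]
  exact (norm_add_le _ _).trans (add_le_add (h s hs t ht) (h' s hs t ht))

lemma MemC.sub (h : MemC γ Z) (h' : MemC γ W) : MemC γ (fun ξ => Z ξ - W ξ) := by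
  refine ⟨⟨h.1.1.sub h'.1.1, ?_⟩, hSemi γ Z + hSemi γ W, fun s hs t ht => ?_⟩
  · show Z 0 - W 0 = Z 1 - W 1
    rw [h.1.2, h'.1.2]
  · have e : Z s - W s - (Z t - W t) = (Z s - Z t) - (W s - W t) := by abel
    rw [e, add_mul]
    exact (norm_sub_le _ _).trans (add_le_add (h.holderBd s hs t ht) (h'.holderBd s hs t ht))

lemma hStar_add_le (h : MemC γ Z) (h' : MemC γ W) :
    hStar γ (fun ξ => Z ξ + W ξ) ≤ hStar γ Z + hStar γ W := by
  have h1 : sNorm (fun ξ => Z ξ + W ξ) ≤ sNorm Z + sNorm W := sNorm_le fun ξ hξ =>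
    (norm_add_le _ _).trans (add_le_add (h.norm_le hξ) (h'.norm_le hξ))
  have h2 := (h.holderBd.add h'.holderBd).hSemi_le
  unfold hStar
  linarith

lemma hStar_sub_comm (γ : ℝ) (Z W : ℝ → E3) :
    hStar γ (fun ξ => Z ξ - W ξ) = hStar γ (fun ξ => W ξ - Z ξ) := by
  have e : ∀ s t, ‖Z s - W s - (Z t - W t)‖ = ‖W s - Z s - (W t - Z t)‖ := fun s t => by
    rw [← norm_neg]
    congr 1
    abel
  simp only [hStar, sNorm, hSemi, e, norm_sub_rev (Z _) (W _)]

lemma hStar_le_add_sub (h : MemC γ Z) (h' : MemC γ W) :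
    hStar γ Z ≤ hStar γ W + hStar γ (fun ξ => Z ξ - W ξ) := by
  have := hStar_add_le h' (h.sub h')
  simpa using this

lemma hStar_zero (γ : ℝ) : hStar γ (fun _ => (0 : E3)) = 0 := by
  refine le_antisymm ?_ (hStar_nonneg _ _)
  have h1 : sNorm (fun _ => (0 : E3)) ≤ 0 := sNorm_le fun ξ _ => by simp
  have h2 : hSemi γ (fun _ => (0 : E3)) ≤ 0 :=
    HolderBd.hSemi_le (M := 0) fun s _ t _ => by simp
  unfold hStar
  linarith

lemma MemC.zero (γ : ℝ) : MemC γ (fun _ => (0 : E3)) :=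
  ⟨⟨continuousOn_const, rfl⟩, 0, fun s _ t _ => by simp⟩

variable {T : ℝ} {Y Yt : ℝ → ℝ → E3}

lemma MemXT.sub (h : MemXT γ T Y) (h' : MemXT γ T Yt) :
    MemXT γ T (fun t ξ => Y t ξ - Yt t ξ) := by
  refine ⟨fun t ht => (h.1 t ht).sub (h'.1 t ht), fun t ht ε hε => ?_⟩
  obtain ⟨δ₁, hδ₁, H₁⟩ := h.2 t ht (ε / 2) (by linarith)
  obtain ⟨δ₂, hδ₂, H₂⟩ := h'.2 t ht (ε / 2) (by linarith)
  refine ⟨min δ₁ δ₂, lt_min hδ₁ hδ₂, fun s hs hst => ?_⟩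
  have a1 := H₁ s hs (hst.trans (min_le_left _ _))
  have a2 := H₂ s hs (hst.trans (min_le_right _ _))
  rw [hStar_sub_comm] at a2
  have := hStar_add_le ((h.1 s hs).sub (h.1 t ht)) ((h'.1 t ht).sub (h'.1 s hs))
  have e : (fun ξ => Y s ξ - Yt s ξ - (Y t ξ - Yt t ξ))
      = fun ξ => (Y s ξ - Y t ξ) + (Yt t ξ - Yt s ξ) := by
    funext ξ
    abel
  rw [e]
  linarith

/-- The supremum defining `‖Y‖_{𝐗_T}` is finite, since `t ↦ ‖Y(t)‖_γ^*` is continuous on the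
compact interval `[0,T]`. -/
lemma MemXT.hStar_le (h : MemXT γ T Y) {t : ℝ} (ht : t ∈ Icc 0 T) : hStar γ (Y t) ≤ xnorm γ T Y := by
  have hc : ContinuousOn (fun t => hStar γ (Y t)) (Icc 0 T) := by
    rw [Metric.continuousOn_iff]
    intro t ht ε hε
    obtain ⟨δ, hδ, H⟩ := h.2 t ht (ε / 2) (by linarith)
    refine ⟨δ, hδ, fun s hs hst => ?_⟩
    have a := H s hs (by rw [← Real.dist_eq]; exact hst.le)
    have b := hStar_le_add_sub (h.1 s hs) (h.1 t ht)
    have c := hStar_le_add_sub (h.1 t ht) (h.1 s hs)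
    rw [hStar_sub_comm] at c
    rw [Real.dist_eq, abs_lt]
    constructor <;> linarith
  obtain ⟨M, hM⟩ := isCompact_Icc.bddAbove_image hc
  refine le_csSup ⟨M, ?_⟩ ⟨t, ht, rfl⟩
  rintro _ ⟨s, hs, rfl⟩
  exact hM ⟨s, hs, rfl⟩

lemma MemXT.zero (γ T : ℝ) : MemXT γ T (fun _ _ => (0 : E3)) :=
  ⟨fun _ _ => MemC.zero γ, fun t _ ε hε => ⟨1, one_pos, fun s _ _ => by
    simpa [hStar_zero] using hε.le⟩⟩

lemma xnorm_le (hT : 0 ≤ T) {M : ℝ} (h : ∀ t ∈ Icc 0 T, hStar γ (Y t) ≤ M) :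
    xnorm γ T Y ≤ M := by
  refine csSup_le ⟨_, 0, ⟨le_rfl, hT⟩, rfl⟩ ?_
  rintro _ ⟨t, ht, rfl⟩
  exact h t ht

lemma xnorm_zero (γ : ℝ) (hT : 0 ≤ T) : xnorm γ T (fun _ _ => (0 : E3)) = 0 :=
  le_antisymm (xnorm_le hT fun _ _ => (hStar_zero γ).le) (xnorm_nonneg _ _ _)

end Norms

/-! ### The map `F` -/

section Flow

variable {γ N T : ℝ} {A : E3 → M3} {Y Yt : ℝ → ℝ → E3} {v vt : ℝ → E3 → E3}

/-- The integrand of `F(Y)` is continuous in time; without this the Bochner integral in `Fmap`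
could be a junk value. -/
lemma continuousOn_velocity (hγ : 1 / 2 < γ) (hA : DerivBdd A N)
    (hv : ∀ s ∈ Icc 0 T, IsYoungVelocity A (Y s) (v s)) (hY : MemXT γ T Y) {ξ : ℝ}
    (hξ : ξ ∈ Icc (0:ℝ) 1) : ContinuousOn (fun s => v s (Y s ξ)) (Icc 0 T) := by
  have hK : 0 ≤ yConst γ := zero_le_one.trans (one_le_yConst hγ)
  have hN := hA.nonneg
  have hR := xnorm_nonneg γ T Y
  set M : ℝ := 2 * yConst γ * N * (1 + xnorm γ T Y) ^ 3 with hM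
  have hM0 : 0 ≤ M := by positivity
  rw [Metric.continuousOn_iff]
  intro t ht ε hε
  obtain ⟨δ, hδ, H⟩ := hY.2 t ht (ε / (M + 1)) (by positivity)
  refine ⟨δ, hδ, fun s hs hst => ?_⟩
  have hd := H s hs (by rw [← Real.dist_eq]; exact hst.le)
  have hsub := (hY.1 s hs).sub (hY.1 t ht)
  have hle : ∀ r ∈ Icc 0 T, HolderBd γ (xnorm γ T Y) (Y r) := fun r hr =>
    (hY.1 r hr).holderBd.mono
      ((le_add_of_nonneg_left (sNorm_nonneg _)).trans (hY.hStar_le hr))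
  have key := velocity_sub_le hγ hA hR (hStar_nonneg γ (fun ξ => Y s ξ - Y t ξ))
    (hle s hs) (hle t ht) (hsub.holderBd.mono (le_add_of_nonneg_left (sNorm_nonneg _)))
    (fun ξ hξ => (hsub.norm_le hξ).trans (le_add_of_nonneg_right (hSemi_nonneg _ _)))
    (hY.1 s hs).1.2 (hY.1 t ht).1.2 (hv s hs) (hv t ht) hξ
  rw [dist_eq_norm]
  calc _ ≤ M * hStar γ (fun ξ => Y s ξ - Y t ξ) := key
    _ ≤ M * (ε / (M + 1)) := mul_le_mul_of_nonneg_left hd hM0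
    _ < ε := by
      rw [mul_div_assoc', div_lt_iff₀ (by positivity)]
      nlinarith

/-- Lipschitz estimate for `F`, with `C_γ = 5 K_γ` where `K_γ` is the Young constant. -/
lemma Fmap_lipschitz (hγ : 1 / 2 < γ) (hA : DerivBdd A N) {X Xt : ℝ → E3}
    (hX : MemC γ X) (hXt : MemC γ Xt) (hT : 0 < T)
    (hv : ∀ s ∈ Icc 0 T, IsYoungVelocity A (Y s) (v s))
    (hvt : ∀ s ∈ Icc 0 T, IsYoungVelocity A (Yt s) (vt s))
    (hY : MemXT γ T Y) (hYt : MemXT γ T Yt) :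
    xnorm γ T (fun t ξ => Fmap X v Y t ξ - Fmap Xt vt Yt t ξ) ≤
      hStar γ (fun ξ => X ξ - Xt ξ) +
        5 * yConst γ * T * N * (1 + xnorm γ T Y + xnorm γ T Yt) ^ 3 *
          xnorm γ T (fun t ξ => Y t ξ - Yt t ξ) := by
  have hK : 0 ≤ yConst γ := zero_le_one.trans (one_le_yConst hγ)
  have hN := hA.nonneg
  have hR1 := xnorm_nonneg γ T Y
  have hR2 := xnorm_nonneg γ T Yt
  have hD := hY.sub hYt
  have hδ := xnorm_nonneg γ T (fun t ξ => Y t ξ - Yt t ξ)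
  set δ := xnorm γ T (fun t ξ => Y t ξ - Yt t ξ) with hδdef
  set R := xnorm γ T Y + xnorm γ T Yt with hRdef
  have hR : 0 ≤ R := by positivity
  set M : ℝ := yConst γ * N * (1 + R) ^ 3 * δ with hMdef
  have hM : 0 ≤ M := by positivity
  have hYR : ∀ s ∈ Icc 0 T, HolderBd γ R (Y s) := fun s hs => (hY.1 s hs).holderBd.mono
    ((le_add_of_nonneg_left (sNorm_nonneg _)).trans ((hY.hStar_le hs).trans (by linarith)))
  have hYtR : ∀ s ∈ Icc 0 T, HolderBd γ R (Yt s) := fun s hs => (hYt.1 s hs).holderBd.mono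
    ((le_add_of_nonneg_left (sNorm_nonneg _)).trans ((hYt.hStar_le hs).trans (by linarith)))
  have hDR : ∀ s ∈ Icc 0 T, HolderBd γ δ (fun ξ => Y s ξ - Yt s ξ) := fun s hs =>
    (hD.1 s hs).holderBd.mono
      ((le_add_of_nonneg_left (sNorm_nonneg _)).trans (hD.hStar_le hs))
  have hDs : ∀ s ∈ Icc 0 T, ∀ ξ ∈ Icc (0:ℝ) 1, ‖Y s ξ - Yt s ξ‖ ≤ δ := fun s hs ξ hξ =>
    ((hD.1 s hs).norm_le hξ).trans
      ((le_add_of_nonneg_right (hSemi_nonneg _ _)).trans (hD.hStar_le hs))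
  have hsup : ∀ s ∈ Icc 0 T, ∀ ξ ∈ Icc (0:ℝ) 1, ‖v s (Y s ξ) - vt s (Yt s ξ)‖ ≤ 2 * M := by
    intro s hs ξ hξ
    refine (velocity_sub_le hγ hA hR hδ (hYR s hs) (hYtR s hs) (hDR s hs) (hDs s hs)
      (hY.1 s hs).1.2 (hYt.1 s hs).1.2 (hv s hs) (hvt s hs) hξ).trans (le_of_eq ?_)
    rw [hMdef]
    ring
  have hhol : ∀ s ∈ Icc 0 T, HolderBd γ (3 * M) (fun ξ => v s (Y s ξ) - vt s (Yt s ξ)) := by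
    intro s hs
    refine (velocity_holder_sub_le hγ hA hR hδ (hYR s hs) (hYtR s hs) (hDR s hs) (hDs s hs)
      (hY.1 s hs).1.2 (hYt.1 s hs).1.2 (hv s hs) (hvt s hs)).mono (le_of_eq ?_)
    rw [hMdef]
    ring
  have hgoal : 5 * yConst γ * T * N * (1 + xnorm γ T Y + xnorm γ T Yt) ^ 3 * δ = 5 * T * M := by
    rw [hMdef, hRdef]
    ring
  rw [hgoal]
  refine xnorm_le hT.le fun t ht => ?_
  have hintegrable : ∀ ξ ∈ Icc (0:ℝ) 1,
      IntervalIntegrable (fun s => v s (Y s ξ) - vt s (Yt s ξ)) volume 0 t := fun ξ hξ =>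
    (((continuousOn_velocity hγ hA hv hY hξ).sub
      (continuousOn_velocity hγ hA hvt hYt hξ)).mono
        (Icc_subset_Icc_right ht.2)).intervalIntegrable_of_Icc ht.1
  have e : ∀ ξ ∈ Icc (0:ℝ) 1, Fmap X v Y t ξ - Fmap Xt vt Yt t ξ
      = (X ξ - Xt ξ) + ∫ s in (0:ℝ)..t, (v s (Y s ξ) - vt s (Yt s ξ)) := by
    intro ξ hξ
    rw [intervalIntegral.integral_sub]
    · unfold Fmap
      abel
    · exact ((continuousOn_velocity hγ hA hv hY hξ).mono
        (Icc_subset_Icc_right ht.2)).intervalIntegrable_of_Icc ht.1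
    · exact ((continuousOn_velocity hγ hA hvt hYt hξ).mono
        (Icc_subset_Icc_right ht.2)).intervalIntegrable_of_Icc ht.1
  have hmem : ∀ s ∈ uIoc (0:ℝ) t, s ∈ Icc 0 T := fun s hs => by
    rw [uIoc_of_le ht.1] at hs
    exact ⟨hs.1.le, hs.2.trans ht.2⟩
  have hXX := hX.sub hXt
  have h1 : sNorm (fun ξ => Fmap X v Y t ξ - Fmap Xt vt Yt t ξ)
      ≤ sNorm (fun ξ => X ξ - Xt ξ) + 2 * M * T := by
    refine sNorm_le fun ξ hξ => ?_
    rw [e ξ hξ]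
    refine (norm_add_le _ _).trans (add_le_add (hXX.norm_le hξ) ?_)
    refine (intervalIntegral.norm_integral_le_of_norm_le_const
      fun s hs => hsup s (hmem s hs) ξ hξ).trans ?_
    rw [sub_zero, abs_of_nonneg ht.1]
    exact mul_le_mul_of_nonneg_left ht.2 (by positivity)
  have h2 : hSemi γ (fun ξ => Fmap X v Y t ξ - Fmap Xt vt Yt t ξ)
      ≤ hSemi γ (fun ξ => X ξ - Xt ξ) + 3 * M * T := by
    refine HolderBd.hSemi_le fun ξ hξ η hη => ?_
    simp only [e ξ hξ, e η hη]
    rw [add_sub_add_comm, ← intervalIntegral.integral_sub (hintegrable ξ hξ) (hintegrable η hη), add_mul]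
    refine (norm_add_le _ _).trans (add_le_add (hXX.holderBd ξ hξ η hη) ?_)
    refine (intervalIntegral.norm_integral_le_of_norm_le_const
      fun s hs => hhol s (hmem s hs) ξ hξ η hη).trans ?_
    rw [sub_zero, abs_of_nonneg ht.1]
    calc 3 * M * |ξ - η| ^ γ * t ≤ 3 * M * |ξ - η| ^ γ * T :=
          mul_le_mul_of_nonneg_left ht.2 (by positivity)
      _ = _ := by ring
  unfold hStar
  linarith

/-- A priori bound on `F(Y)`: the Lipschitz estimate against the zero curve, which `F` with
initial datum `0` maps to itself. -/
lemma Fmap_bound (hγ : 1 / 2 < γ) (hA : DerivBdd A N) {X : ℝ → E3} (hX : MemC γ X) (hT : 0 < T)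
    (hv : ∀ s ∈ Icc 0 T, IsYoungVelocity A (Y s) (v s)) (hY : MemXT γ T Y) :
    xnorm γ T (Fmap X v Y) ≤ hStar γ X +
      5 * yConst γ * T * N * (1 + xnorm γ T Y) ^ 3 * xnorm γ T Y := by
  have hv0 : ∀ s ∈ Icc 0 T, IsYoungVelocity A ((fun _ _ => 0 : ℝ → ℝ → E3) s)
      ((fun _ _ => 0 : ℝ → E3 → E3) s) := by
    intro s _ x ε hε
    exact ⟨1, one_pos, fun P _ => by simpa [youngRS] using hε.le⟩
  have h := Fmap_lipschitz hγ hA hX (MemC.zero γ) hT hv hv0 hY (MemXT.zero γ T)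
  have e : (fun t ξ => Fmap X v Y t ξ
      - Fmap (fun _ => 0) (fun _ _ => 0) (fun _ _ => 0) t ξ) = Fmap X v Y := by
    funext t ξ
    simp [Fmap]
  rw [e] at h
  simpa [xnorm_zero γ hT.le] using h

end Flow

/-- Lipschitz estimate and contraction, Young case. For `1/2 < γ ≤ 1` there
is a constant `C_γ` depending only on `γ` such that, for every `A` with `‖∇A‖_2 < ∞`:
`‖F(Y) - F̃(Ỹ)‖_{𝐗_T} ≤ ‖X - X̃‖_γ^* + C_γ T ‖∇A‖_2 (1 + ‖Y‖_{𝐗_T} + ‖Ỹ‖_{𝐗_T})³ ‖Y - Ỹ‖_{𝐗_T}`,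
and in particular there is a time `T̄ > 0` such that `F` is a strict contraction on the
invariant set `Q_{T̄}`. -/
theorem statement_6 (γ : ℝ) (hγ : 1 / 2 < γ) (hγ1 : γ ≤ 1) :
    ∃ C : ℝ, 1 ≤ C ∧
      ∀ A : E3 → M3, NablaBdd 1 2 A →
        (∀ X Xt : ℝ → E3, MemC γ X → MemC γ Xt →
          ∀ T : ℝ, 0 < T →
          ∀ (Y Yt : ℝ → ℝ → E3) (v vt : ℝ → E3 → E3),
            (∀ s ∈ Icc 0 T, IsYoungVelocity A (Y s) (v s)) →
            (∀ s ∈ Icc 0 T, IsYoungVelocity A (Yt s) (vt s)) →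
            MemXT γ T Y → MemXT γ T Yt →
            xnorm γ T (fun t ξ => Fmap X v Y t ξ - Fmap Xt vt Yt t ξ) ≤
              hStar γ (fun ξ => X ξ - Xt ξ) +
                C * T * nablaNorm 1 2 A * (1 + xnorm γ T Y + xnorm γ T Yt) ^ 3 *
                  xnorm γ T (fun t ξ => Y t ξ - Yt t ξ)) ∧
        (∀ X : ℝ → E3, MemC γ X →
          ∃ Tb : ℝ, 0 < Tb ∧ ∃ B α : ℝ, 0 ≤ α ∧ α < 1 ∧
            ∀ (Y Yt : ℝ → ℝ → E3) (v vt : ℝ → E3 → E3),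
              (∀ s ∈ Icc 0 Tb, IsYoungVelocity A (Y s) (v s)) →
              (∀ s ∈ Icc 0 Tb, IsYoungVelocity A (Yt s) (vt s)) →
              MemXT γ Tb Y → MemXT γ Tb Yt →
              (∀ ξ ∈ Icc (0:ℝ) 1, Y 0 ξ = X ξ) →
              (∀ ξ ∈ Icc (0:ℝ) 1, Yt 0 ξ = X ξ) →
              xnorm γ Tb Y ≤ B → xnorm γ Tb Yt ≤ B →
              xnorm γ Tb (Fmap X v Y) ≤ B ∧
                xnorm γ Tb (fun t ξ => Fmap X v Y t ξ - Fmap X vt Yt t ξ) ≤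
                  α * xnorm γ Tb (fun t ξ => Y t ξ - Yt t ξ)) := by
  have hK := one_le_yConst hγ
  refine ⟨5 * yConst γ, by linarith, fun A hA => ⟨?_, ?_⟩⟩
  · intro X Xt hX hXt T hT Y Yt v vt hv hvt hY hYt
    exact Fmap_lipschitz hγ hA.derivBdd hX hXt hT hv hvt hY hYt
  · intro X hX
    have hN := hA.derivBdd.nonneg
    set N := nablaNorm 1 2 A with hNdef
    have hX0 := hStar_nonneg γ X
    set B := hStar γ X + 1 with hB
    have hB1 : 1 ≤ B := by linarith
    set L := 5 * yConst γ * N * (1 + B + B) ^ 3 with hL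
    have hL0 : 0 ≤ L := by positivity
    -- the choice of the time makes both `L * Tb` and `L * Tb * B` at most `1 / 2`
    set Tb := 1 / (2 * (L + 1) * B) with hTb
    have hTb0 : 0 < Tb := by positivity
    have hLTB : L * Tb * B ≤ 1 / 2 := by
      have e : L * Tb * B = L / (2 * (L + 1)) := by
        rw [hTb]
        field_simp
      rw [e, div_le_iff₀ (by positivity)]
      linarith
    have hLT : L * Tb ≤ 1 / 2 := by
      have : L * Tb * 1 ≤ L * Tb * B := mul_le_mul_of_nonneg_left hB1 (by positivity)
      linarith
    refine ⟨Tb, hTb0, B, 1 / 2, by norm_num, by norm_num, ?_⟩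
    intro Y Yt v vt hv hvt hY hYt _ _ hYB hYtB
    have hY0 := xnorm_nonneg γ Tb Y
    have hYt0 := xnorm_nonneg γ Tb Yt
    constructor
    · refine (Fmap_bound hγ hA.derivBdd hX hTb0 hv hY).trans ?_
      have : 5 * yConst γ * Tb * N * (1 + xnorm γ Tb Y) ^ 3 * xnorm γ Tb Y
          ≤ 5 * yConst γ * Tb * N * (1 + B + B) ^ 3 * B := by
        gcongr
        linarith
      have e : 5 * yConst γ * Tb * N * (1 + B + B) ^ 3 * B = L * Tb * B := by
        rw [hL]
        ring
      linarith
    · refine (Fmap_lipschitz hγ hA.derivBdd hX hX hTb0 hv hvt hY hYt).trans ?_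
      have hD0 := xnorm_nonneg γ Tb (fun t ξ => Y t ξ - Yt t ξ)
      simp only [sub_self, hStar_zero, zero_add]
      refine mul_le_mul_of_nonneg_right ?_ hD0
      have : 5 * yConst γ * Tb * N * (1 + xnorm γ Tb Y + xnorm γ Tb Yt) ^ 3
          ≤ 5 * yConst γ * Tb * N * (1 + B + B) ^ 3 := by
        gcongr
      have e : 5 * yConst γ * Tb * N * (1 + B + B) ^ 3 = L * Tb := by
        rw [hL]
        ring
      linarith

end
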